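/- For every m = 2^k with k ≥ 1, the set of all allowed m-words of the period-doubling sequence equals {w_i^(m) : 1 ≤ i ≤ (3/2)m}; in particular p(m) = (3/2)m. -/

import Mathlib

/-!
The sequence satisfies `ω (2i+1) = 0` and `ω (2i) = 1 - ω i`. Hence each of the words of length
`2m` starting at `2j` and at `2j - 1` determines, and is determined by, the word of length `m`
starting at `j`. Moreover a word starting at an even position never equals one starting at an odd
position: equality would force `ω j = ω (j+1) = 1`, but one of `j`, `j+1` is odd.

So if every `m`-word occurs exactly once among the starting positions `1, …, 3m/2`, the same
holds for `2m` and `1, …, 3m`. Existence (`agree_exists`) and uniqueness (`agree_unique`) of such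
a starting position follow by induction on `k` from the case `m = 2`.
-/

open Filter Topology

/-- The period-doubling sequence (1-based): `pd i = k_i mod 2` where `k_i` is the
largest `k` such that `2^k` divides `i`. -/
def pd (i : ℕ) : ℕ := padicValNat 2 i % 2

/-- The `m`-word `w_i^(m) = ω_i ω_{i+1} ⋯ ω_{i+m-1}` of the period-doubling sequence. -/
def wordAt (i m : ℕ) : List ℕ := (List.range m).map (fun h => pd (i + h))

/-- An `m`-word is allowed if it occurs in the period-doubling sequence. -/
def Allowed (m : ℕ) (v : List ℕ) : Prop := ∃ i, 1 ≤ i ∧ wordAt i m = v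

/-- The complexity function of the period-doubling sequence. -/
noncomputable def pdComplexity (m : ℕ) : ℕ := Set.ncard {v | Allowed m v}

/-- `HasFreq m v c`: the frequency of the `m`-word `v` in the period-doubling
sequence exists and equals `c`. -/
def HasFreq (m : ℕ) (v : List ℕ) (c : ℝ) : Prop :=
  Tendsto (fun n : ℕ => (((Finset.Icc 1 n).filter (fun i => wordAt i m = v)).card : ℝ) / n)
    atTop (𝓝 c)

open Classical in
/-- The correlation sum `C(ω, n, m)` of the period-doubling sequence, for a distance
threshold `ε` with `2^{-m} ≤ ε < 2^{-m+1}`. -/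
noncomputable def corrSum (n m : ℕ) : ℝ :=
  (((Finset.range n ×ˢ Finset.range n).filter
      (fun p : ℕ × ℕ => ∀ h ∈ Finset.Icc 1 m, pd (p.1 + h) = pd (p.2 + h))).card : ℝ) / (n : ℝ) ^ 2

/-- The period-doubling substitution `ζ(0) = 01`, `ζ(1) = 00`, extended to a morphism
on finite words. -/
def substWord (w : List ℕ) : List ℕ := (w.map (fun a => if a = 0 then [0, 1] else [0, 0])).flatten

/-- The period-doubling substitution acting on one-sided infinite sequences
(0-based indexing). -/
def substSeq (x : ℕ → ℕ) : ℕ → ℕ := fun n =>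
  if n % 2 = 0 then 0 else if x (n / 2) = 0 then 1 else 0

/-- The words of length `m` starting at `i` and `j` coincide. -/
def Agree (m i j : ℕ) : Prop := ∀ h < m, pd (i + h) = pd (j + h)

lemma wordAt_eq_iff (m i j : ℕ) : wordAt i m = wordAt j m ↔ Agree m i j := by
  simp [wordAt, Agree, List.map_inj_left]

lemma pd_odd (i : ℕ) : pd (2 * i + 1) = 0 := by
  have h : padicValNat 2 (2 * i + 1) = 0 := padicValNat.eq_zero_of_not_dvd (by omega)
  simp [pd, h]

lemma pd_two_mul {i : ℕ} (hi : 1 ≤ i) : pd (2 * i) = 1 - pd i := by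
  have h : padicValNat 2 (2 * i) = 1 + padicValNat 2 i := by
    rw [padicValNat.mul (by norm_num) (by omega), padicValNat_self]
  unfold pd
  omega

lemma pd_le_one (i : ℕ) : pd i ≤ 1 := by
  unfold pd
  omega

lemma Agree.even {m i j : ℕ} (hi : 1 ≤ i) (hj : 1 ≤ j) :
    Agree (2 * m) (2 * i) (2 * j) ↔ Agree m i j := by
  constructor
  · intro H h hh
    have := H (2 * h) (by omega)
    rw [← mul_add, ← mul_add, pd_two_mul (by omega), pd_two_mul (by omega)] at this
    have := pd_le_one (i + h)
    have := pd_le_one (j + h)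
    omega
  · intro H h hh
    obtain ⟨t, rfl | rfl⟩ := Nat.even_or_odd' h
    · rw [← mul_add, ← mul_add, pd_two_mul (by omega), pd_two_mul (by omega), H t (by omega)]
    · rw [← add_assoc, ← add_assoc, ← mul_add, ← mul_add, pd_odd, pd_odd]

lemma Agree.odd {m i j : ℕ} :
    Agree (2 * m) (2 * i + 1) (2 * j + 1) ↔ Agree m (i + 1) (j + 1) := by
  have e (i t : ℕ) : 2 * i + 1 + (2 * t + 1) = 2 * (i + 1 + t) := by ring
  have o (i t : ℕ) : 2 * i + 1 + 2 * t = 2 * (i + t) + 1 := by ring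
  constructor
  · intro H h hh
    have := H (2 * h + 1) (by omega)
    rw [e, e, pd_two_mul (by omega), pd_two_mul (by omega)] at this
    have := pd_le_one (i + 1 + h)
    have := pd_le_one (j + 1 + h)
    omega
  · intro H h hh
    obtain ⟨t, rfl | rfl⟩ := Nat.even_or_odd' h
    · rw [o, o, pd_odd, pd_odd]
    · rw [e, e, pd_two_mul (by omega), pd_two_mul (by omega), H t (by omega)]

/-- A word of length at least `4` determines the parity of its starting position. -/
lemma not_agree_even_odd {m i j : ℕ} (hm : 4 ≤ m) (hi : 1 ≤ i) :
    ¬ Agree m (2 * i) (2 * j + 1) := by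
  intro H
  have h0 := H 0 (by omega)
  have h2 := H 2 (by omega)
  rw [add_zero, add_zero, pd_odd, pd_two_mul hi] at h0
  rw [show 2 * i + 2 = 2 * (i + 1) by ring, show 2 * j + 1 + 2 = 2 * (j + 1) + 1 by ring, pd_odd,
    pd_two_mul (by omega)] at h2
  obtain ⟨t, rfl | rfl⟩ := Nat.even_or_odd' i
  · rw [pd_odd] at h2
    omega
  · rw [pd_odd] at h0
    omega

lemma pd_one : pd 1 = 0 := pd_odd 0

lemma pd_two : pd 2 = 1 := by
  rw [pd_two_mul (i := 1) le_rfl, pd_one]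

lemma pd_three : pd 3 = 0 := pd_odd 1

lemma pd_four : pd 4 = 0 := by
  rw [pd_two_mul (i := 2) (by norm_num), pd_two]

lemma agree_two_iff {i j : ℕ} :
    Agree 2 i j ↔ pd i = pd j ∧ pd (i + 1) = pd (j + 1) := by
  constructor
  · intro H
    exact ⟨H 0 (by norm_num), H 1 (by norm_num)⟩
  · rintro ⟨h0, h1⟩ h hh
    interval_cases h
    · exact h0
    · exact h1

lemma agree_exists (k : ℕ) (hk : 1 ≤ k) :
    ∀ i, 1 ≤ i → ∃ j, 1 ≤ j ∧ 2 * j ≤ 3 * 2 ^ k ∧ Agree (2 ^ k) i j := by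
  induction k, hk using Nat.le_induction with
  | base =>
    intro i hi
    simp only [pow_one, agree_two_iff]
    have h0 := pd_le_one i
    have h1 := pd_le_one (i + 1)
    -- Adjacent letters are `01`, `10` or `00`, occurring at positions `1`, `2`, `3`.
    have h : pd i = 0 ∨ pd (i + 1) = 0 := by
      obtain ⟨t, rfl | rfl⟩ := Nat.even_or_odd' i
      · exact Or.inr (pd_odd t)
      · exact Or.inl (pd_odd t)
    by_cases a : pd i = 0
    · by_cases b : pd (i + 1) = 0
      · exact ⟨3, by norm_num, by norm_num, by simp [a, b, pd_three, pd_four]⟩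
      · exact ⟨1, by norm_num, by norm_num, by simp only [pd_one, Nat.reduceAdd, pd_two]; omega⟩
    · exact ⟨2, by norm_num, by norm_num, by simp only [pd_two, Nat.reduceAdd, pd_three]; omega⟩
  | succ k hk ih =>
    intro i hi
    rw [pow_succ']
    obtain ⟨t, rfl | rfl⟩ := Nat.even_or_odd' i
    · obtain ⟨j, hj, hj', H⟩ := ih t (by omega)
      exact ⟨2 * j, by omega, by omega, (Agree.even (by omega) hj).2 H⟩
    · obtain ⟨j, hj, hj', H⟩ := ih (t + 1) (by omega)
      obtain ⟨s, rfl⟩ := Nat.exists_eq_add_of_le' hj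
      exact ⟨2 * s + 1, by omega, by omega, Agree.odd.2 H⟩

lemma agree_unique (k : ℕ) (hk : 1 ≤ k) :
    ∀ i j, 1 ≤ i → 2 * i ≤ 3 * 2 ^ k → 1 ≤ j → 2 * j ≤ 3 * 2 ^ k →
      Agree (2 ^ k) i j → i = j := by
  induction k, hk using Nat.le_induction with
  | base =>
    intro i j hi hi' hj hj'
    simp only [pow_one, agree_two_iff] at *
    have : i ≤ 3 := by omega
    have : j ≤ 3 := by omega
    interval_cases i <;> interval_cases j <;> simp [pd_one, pd_two, pd_three, pd_four]
  | succ k hk ih =>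
    intro i j hi hi' hj hj' H
    have h2 : 2 ≤ 2 ^ k := by simpa using Nat.pow_le_pow_right (n := 2) (by norm_num) hk
    rw [pow_succ'] at hi' hj' H
    obtain ⟨t, rfl | rfl⟩ := Nat.even_or_odd' i <;> obtain ⟨s, rfl | rfl⟩ := Nat.even_or_odd' j
    · rw [ih t s (by omega) (by omega) (by omega) (by omega)
        ((Agree.even (by omega) (by omega)).1 H)]
    · exact (not_agree_even_odd (by omega) (by omega) H).elim
    · exact (not_agree_even_odd (by omega) (by omega) fun h hh => (H h hh).symm).elim
    · -- `2 ^ k` is even, so `2 * t + 1 ≤ 3 * 2 ^ k` improves to `2 * (t + 1) ≤ 3 * 2 ^ k`.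
      obtain ⟨n, hn⟩ : 2 ∣ 2 ^ k := dvd_pow_self 2 (by omega)
      have := ih (t + 1) (s + 1) (by omega) (by omega) (by omega) (by omega) (Agree.odd.1 H)
      omega

theorem pd_language_pow_two (k m : ℕ) (hk : 1 ≤ k) (hm : m = 2 ^ k) :
    {v | Allowed m v} = {v | ∃ i, 1 ≤ i ∧ i ≤ 3 * m / 2 ∧ wordAt i m = v} ∧
    pdComplexity m = 3 * m / 2 := by
  subst hm
  have key : {v | Allowed (2 ^ k) v} =
      {v | ∃ i, 1 ≤ i ∧ i ≤ 3 * 2 ^ k / 2 ∧ wordAt i (2 ^ k) = v} := by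
    ext v
    constructor
    · rintro ⟨i, hi, rfl⟩
      obtain ⟨j, hj, hj', H⟩ := agree_exists k hk i hi
      exact ⟨j, hj, by omega, ((wordAt_eq_iff _ _ _).2 H).symm⟩
    · rintro ⟨i, hi, -, h⟩
      exact ⟨i, hi, h⟩
  refine ⟨key, ?_⟩
  have himg : {v | ∃ i, 1 ≤ i ∧ i ≤ 3 * 2 ^ k / 2 ∧ wordAt i (2 ^ k) = v} =
      (fun i => wordAt i (2 ^ k)) '' (Finset.Icc 1 (3 * 2 ^ k / 2) : Finset ℕ) := by
    ext v
    simp [and_assoc]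
  rw [pdComplexity, key, himg, Set.InjOn.ncard_image, Set.ncard_coe_finset, Nat.card_Icc,
    Nat.add_sub_cancel]
  intro i hi j hj h
  simp only [Finset.coe_Icc, Set.mem_Icc] at hi hj
  exact agree_unique k hk i j hi.1 (by omega) hj.1 (by omega) ((wordAt_eq_iff _ _ _).1 h)
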